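/- Let q = 4 and k ≥ 1 an integer, and let g(x) = x + S_{2k}(x)^{q^{2k}} + S_{2k}(x)^{q^k+3}. Then for every nonzero a ∈ F_{q^{3k}}, Σ_{x ∈ F_{q^{3k}}} (−1)^{Tr(a · g(x))} = 0, where Tr = Tr_{q^{3k}/2} is the absolute trace to F_2. -/

import Mathlib

/-- `S2k q k x = x + x^q + x^(q^2) + ⋯ + x^(q^(2k-1))`. -/
def S2k (q k : ℕ) {F : Type*} [Field F] (x : F) : F :=
  ∑ i ∈ Finset.range (2 * k), x ^ q ^ i

/-- The absolute trace to `F_2` of a field with `2^m` elements: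
`Tr(x) = x + x^2 + x^4 + ⋯ + x^{2^{m-1}}`. -/
def absTr (m : ℕ) {F : Type*} [Field F] (x : F) : F :=
  ∑ i ∈ Finset.range m, x ^ 2 ^ i

/-- `(-1)^a` for `a ∈ F_2 ⊆ F`: `1` if `a = 0`, `-1` otherwise. -/
def chi {F : Type*} [Field F] [DecidableEq F] (a : F) : ℤ :=
  if a = 0 then 1 else -1

/-!
Put `m = 4 ^ k`, so that `x ↦ x ^ m` is an automorphism of the field with `m ^ 3` elements whose
cube is the identity, and write `y = S_{2k}(x)`. The conjugates of `y` satisfy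
`y + y ^ m + y ^ m ^ 2 = 0`, the sum being twice a trace, and telescoping gives
`y ^ 4 + y = x ^ m ^ 2 + x`. Together these collapse `g(x) + g(x) ^ m ^ 2` to the monomial
`y ^ ((m + 1) ^ 2)`. Raising to the power `m + 1` is injective because `m + 1` divides `m ^ 3 + 1`
and `y ^ (m ^ 3 + 1) = y ^ 2`. Hence `g(x)` determines `y`, and then `x`; so `g` is a permutation
and the sum is that of a nontrivial additive character.
-/

theorem pow_add_one_injective_of_odd {M : Type*} [Monoid M] {m n : ℕ} (hn : Odd n)
    (hpow : ∀ x : M, x ^ m ^ n = x) (hsq : Function.Injective fun x : M ↦ x ^ 2) :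
    Function.Injective fun x : M ↦ x ^ (m + 1) := by
  obtain ⟨c, hc⟩ : m + 1 ∣ m ^ n + 1 := by simpa using hn.nat_add_dvd_pow_add_pow m 1
  have sq_eq (x : M) : x ^ 2 = (x ^ (m + 1)) ^ c := by
    rw [sq, ← pow_mul, ← hc, pow_succ, hpow]
  intro x y hxy
  apply hsq
  simp only [sq_eq]
  exact congrArg (· ^ c) hxy

section S2k

variable {F : Type*} [Field F] {p n q k : ℕ}

theorem S2k_pow_pow [Fact p.Prime] [CharP F p] (hq : q = p ^ n) (j : ℕ) (x : F) :
    S2k q k x ^ q ^ j = ∑ i ∈ Finset.range (2 * k), x ^ q ^ (i + j) := by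
  have hqj : q ^ j = p ^ (n * j) := by rw [hq, pow_mul]
  simp only [S2k, pow_add, pow_mul]
  rw [hqj, sum_pow_char_pow]

theorem S2k_pow_sub_self [Fact p.Prime] [CharP F p] (hq : q = p ^ n) (x : F) :
    S2k q k x ^ q - S2k q k x = x ^ q ^ (2 * k) - x := by
  have hpow : S2k q k x ^ q = ∑ i ∈ Finset.range (2 * k), x ^ q ^ (i + 1) := by
    simpa only [pow_one] using S2k_pow_pow hq 1 x
  rw [hpow, S2k, ← Finset.sum_sub_distrib, Finset.sum_range_sub (fun i ↦ x ^ q ^ i),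
    pow_zero, pow_one]

theorem S2k_add_pow_add_pow [Fact p.Prime] [CharP F p] (hq : q = p ^ n) {x : F}
    (hx : x ^ q ^ (3 * k) = x) :
    S2k q k x + S2k q k x ^ q ^ k + S2k q k x ^ q ^ (2 * k) =
      2 * ∑ i ∈ Finset.range (3 * k), x ^ q ^ i := by
  have hperiod (i : ℕ) : x ^ q ^ (3 * k + i) = x ^ q ^ i := by rw [pow_add, pow_mul, hx]
  rw [S2k_pow_pow hq, S2k_pow_pow hq, S2k, show 3 * k = k + k + k by ring, two_mul k]
  simp only [Finset.sum_range_add]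
  have hlast : ∑ i ∈ Finset.range k, x ^ q ^ (k + i + (k + k)) =
      ∑ i ∈ Finset.range k, x ^ q ^ i :=
    Finset.sum_congr rfl fun i _ ↦ by rw [← hperiod i]; ring_nf
  rw [hlast]
  ring_nf

theorem S2k_pow_pow_two_mul [CharP F 2] (hq : q = 2 ^ n) {x : F} (hx : x ^ q ^ (3 * k) = x) :
    S2k q k x ^ q ^ (2 * k) = S2k q k x + S2k q k x ^ q ^ k := by
  have hsum := S2k_add_pow_add_pow hq hx
  rw [CharTwo.two_eq_zero (R := F), zero_mul, CharTwo.add_eq_zero] at hsum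
  exact hsum.symm

end S2k

theorem quartic_identity_of_charP_two {R : Type*} [CommRing R] [CharP R 2] (y z : R) :
    y ^ 4 + z * y ^ 3 + y * (y + z) ^ 3 = (y + z) * z * (z * y) := by
  linear_combination (y ^ 4 + 2 * y ^ 3 * z + y ^ 2 * z ^ 2) * (CharTwo.two_eq_zero : (2 : R) = 0)

section Permutation

/-- The map `g(x) = x + S_{2k}(x)^{q^{2k}} + S_{2k}(x)^{q^k+3}`, for arbitrary `q`; it is shown to
permute the field with `q^{3k}` elements when `q = 4`. -/
def gMap (q k : ℕ) {F : Type*} [Field F] (x : F) : F :=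
  x + S2k q k x ^ q ^ (2 * k) + S2k q k x ^ (q ^ k + 3)

variable {F : Type*} [Field F] [CharP F 2] {k : ℕ}

theorem gMap_four_add_pow (hF : ∀ x : F, x ^ 4 ^ (3 * k) = x) (x : F) :
    gMap 4 k x + gMap 4 k x ^ 4 ^ (2 * k) = (S2k 4 k x ^ (4 ^ k + 1)) ^ (4 ^ k + 1) := by
  have hfour : (4 : ℕ) = 2 ^ 2 := rfl
  have hadd (u v : F) : (u + v) ^ 4 ^ (2 * k) = u ^ 4 ^ (2 * k) + v ^ 4 ^ (2 * k) := by
    rw [hfour, ← pow_mul, add_pow_char_pow]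
  have htelescope := S2k_pow_sub_self (k := k) hfour x
  have hy2k := S2k_pow_pow_two_mul hfour (hF x)
  rw [gMap]
  set y := S2k 4 k x
  set z := y ^ 4 ^ k with hz
  have hzk : z ^ 4 ^ k = y + z := by rw [hz, ← pow_mul, ← pow_add, ← two_mul, hy2k]
  have hz2k : z ^ 4 ^ (2 * k) = y := by
    rw [hz, ← pow_mul, ← pow_add, show k + 2 * k = 3 * k by ring, hF]
  have hyz2k : (y + z) ^ 4 ^ (2 * k) = z := by rw [← hzk, pow_right_comm, hz2k]
  have hleft : y ^ (4 ^ k + 3) = z * y ^ 3 := pow_add y _ 3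
  have hright : (y ^ (4 ^ k + 1)) ^ (4 ^ k + 1) = (y + z) * z * (z * y) := by
    rw [pow_succ y, ← hz, pow_succ, mul_pow, hzk]
  rw [hleft, hright, hy2k, hadd, hadd, mul_pow, hz2k, hyz2k, pow_right_comm y 3, hy2k]
  linear_combination quartic_identity_of_charP_two y z - htelescope +
    (x + z) * (CharTwo.two_eq_zero : (2 : F) = 0)

theorem gMap_four_injective (hF : ∀ x : F, x ^ 4 ^ (3 * k) = x) :
    Function.Injective (gMap 4 k : F → F) := by
  have hpow : Function.Injective fun y : F ↦ y ^ (4 ^ k + 1) :=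
    pow_add_one_injective_of_odd (n := 3) (by decide)
      (fun x ↦ by rw [← pow_mul, mul_comm k, hF]) CharTwo.sq_injective
  intro x x' hg
  have hS : S2k 4 k x = S2k 4 k x' := by
    apply hpow
    apply hpow
    simp only [← gMap_four_add_pow hF, hg]
  simpa only [gMap, hS, add_left_inj] using hg

end Permutation

section TraceCharacter

variable {F : Type*} [Field F]

theorem absTr_eq_algebraMap_trace [Fintype F] [Algebra (ZMod 2) F] {m : ℕ}
    (hF : Fintype.card F = 2 ^ m) (x : F) :
    absTr m x = algebraMap (ZMod 2) F (Algebra.trace (ZMod 2) F x) := by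
  have hrank : Module.finrank (ZMod 2) F = m := by
    have hcard := Module.card_eq_pow_finrank (K := ZMod 2) (V := F)
    rw [hF, ZMod.card] at hcard
    exact (Nat.pow_right_injective le_rfl hcard).symm
  rw [FiniteField.algebraMap_trace_eq_sum_pow, hrank, Nat.card_zmod, absTr]

theorem chi_algebraMap [DecidableEq F] [Algebra (ZMod 2) F] (t : ZMod 2) :
    chi (algebraMap (ZMod 2) F t) = AddChar.zmodChar 2 (neg_one_sq : (-1 : ℤ) ^ 2 = 1) t := by
  simp only [chi, AddChar.zmodChar_apply, FaithfulSMul.algebraMap_eq_zero_iff]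
  decide +revert

theorem sum_chi_absTr [Fintype F] [DecidableEq F] {m : ℕ} (hF : Fintype.card F = 2 ^ m) :
    ∑ x : F, chi (absTr m x) = 0 := by
  have : CharP F 2 := charP_of_card_eq_prime_pow hF
  let _ : Algebra (ZMod 2) F := ZMod.algebra F 2
  let ψ : AddChar F ℤ := (AddChar.zmodChar 2 neg_one_sq).compAddMonoidHom
    (Algebra.trace (ZMod 2) F).toAddMonoidHom
  have hψ : ψ ≠ 1 := by
    obtain ⟨x, hx⟩ := Algebra.trace_surjective (ZMod 2) F 1
    refine AddChar.ne_one_iff.mpr ⟨x, ?_⟩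
    change AddChar.zmodChar 2 neg_one_sq (Algebra.trace (ZMod 2) F x) ≠ 1
    rw [hx]
    decide
  calc ∑ x : F, chi (absTr m x) = ∑ x, ψ x :=
        Finset.sum_congr rfl fun x _ ↦ by
          rw [absTr_eq_algebraMap_trace hF, chi_algebraMap]; rfl
    _ = 0 := AddChar.sum_eq_zero_of_ne_one hψ

end TraceCharacter

/-- For `q = 4`, `k ≥ 1` and `g(x) = x + S_{2k}(x)^{q^{2k}} + S_{2k}(x)^{q^k+3}`:
for every nonzero `a ∈ F_{q^{3k}}`, `Σ_{x ∈ F_{q^{3k}}} (−1)^{Tr(a·g(x))} = 0`,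
where `Tr = Tr_{q^{3k}/2}` (note `4^{3k} = 2^{6k}`). -/
theorem stmt_14 (k : ℕ) (hk : 0 < k)
    (F : Type*) [Field F] [Fintype F] [DecidableEq F]
    (hF : Fintype.card F = 4 ^ (3 * k))
    (a : F) (ha : a ≠ 0) :
    ∑ x : F, chi (absTr (6 * k)
        (a * (x + (S2k 4 k x) ^ 4 ^ (2 * k) + (S2k 4 k x) ^ (4 ^ k + 3)))) = 0 := by
  have hcard : Fintype.card F = 2 ^ (6 * k) := by
    rw [hF, show (4 : ℕ) = 2 ^ 2 from rfl, ← pow_mul]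
    ring_nf
  have : CharP F 2 := charP_of_card_eq_prime_pow hcard
  have hpow (x : F) : x ^ 4 ^ (3 * k) = x := hF ▸ FiniteField.pow_card x
  have hbij : Function.Bijective fun x : F ↦ a * gMap 4 k x :=
    Finite.injective_iff_bijective.mp
      ((mul_right_injective₀ ha).comp (gMap_four_injective hpow))
  exact (hbij.sum_comp fun z ↦ chi (absTr (6 * k) z)).trans (sum_chi_absTr hcard)
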